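/- Let C ⊂ P³ be a smooth quintic rational curve such that every 3-secant line to C is a 4-secant line. Then C lies on a smooth quadric surface S ≅ P¹ × P¹ as a divisor of type (1,4). -/

import Mathlib

open MvPolynomial TensorProduct

/-- The binary form of degree `n` obtained by restricting a linear functional `φ` on
`ℂⁿ⁺¹` to the rational normal curve `[s : t] ↦ [sⁿ : sⁿ⁻¹t : ⋯ : tⁿ]`. -/
noncomputable def restrictForm (n : ℕ) (φ : Module.Dual ℂ (Fin (n + 1) → ℂ)) :
    MvPolynomial (Fin 2) ℂ :=
  ∑ i : Fin (n + 1), C (φ (Pi.single i 1)) * (X 0 ^ (n - (i : ℕ)) * X 1 ^ (i : ℕ))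

/-- The linear span of the divisor on the rational normal curve of degree `n` cut out by a
binary form `g`. -/
noncomputable def divisorSpan (n : ℕ) (g : MvPolynomial (Fin 2) ℂ) :
    Submodule ℂ (Fin (n + 1) → ℂ) :=
  ⨅ φ ∈ {φ : Module.Dual ℂ (Fin (n + 1) → ℂ) | g ∣ restrictForm n φ}, LinearMap.ker φ

/-- The parametrization of a quintic rational curve in `ℙ³`, as the projection of the
rational normal quintic by a linear map `A : ℂ⁶ → ℂ⁴`. -/
noncomputable def quinticCurve (A : (Fin 6 → ℂ) →ₗ[ℂ] (Fin 4 → ℂ))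
    (x : Fin 2 → ℂ) : Fin 4 → ℂ :=
  A (fun i => x 0 ^ (5 - (i : ℕ)) * x 1 ^ (i : ℕ))

/-- `L ⊂ ℙ³` is a `k`-secant line of the quintic curve: `L` meets the curve in a scheme of
length at least `k`. -/
def IsSecantLine (A : (Fin 6 → ℂ) →ₗ[ℂ] (Fin 4 → ℂ)) (k : ℕ)
    (L : Submodule ℂ (Fin 4 → ℂ)) : Prop :=
  Module.finrank ℂ L = 2 ∧
  ∃ g : MvPolynomial (Fin 2) ℂ, g.IsHomogeneous k ∧ g ≠ 0 ∧
    ∀ ψ : Module.Dual ℂ (Fin 4 → ℂ), L ≤ LinearMap.ker ψ →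
      g ∣ restrictForm 5 (ψ ∘ₗ A)

/-!
Put `U = ker A` and let `D_g ⊆ ℂ⁶` be the span of the divisor of a binary form `g`; its dimension
is `deg g`. The secant variety of the rational normal quintic is cut out by the maximal minors of
`4 × 3` catalecticant matrices, and a net of such matrices always has a degenerate member, so
smoothness forces `dim U = 2`. Every nonzero `u ∈ U` lies in `D_g` for some cubic `g`, the image
`A(D_g)` is then a trisecant line, and since it is quadrisecant there is a quartic `h` with
`D_h = D_g ⊔ U`. A quartic has finitely many cubic divisors `g`, and each `D_g` meets `U` in at most
a line, so different `u` produce two quartics `h`, `k`, not multiples of each other, with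
`U ⊆ D_h ∩ D_k`. If `h` and `k` shared a cubic factor `g`, then `U ⊆ D_h ∩ D_k = D_g`, which is
impossible; hence the quintics `X₀h, X₁h, X₀k, X₁k` are linearly independent. They vanish on `U`,
so they are linear coordinates on `ℙ³`, and in them the curve is `x ↦ x ⊗ (h(x), k(x))`.
-/

section LinearAlgebra

variable {K V W : Type*} [Field K] [AddCommGroup V] [Module K V] [AddCommGroup W] [Module K W]

theorem dual_apply_eq_sum {R ι : Type*} [CommSemiring R] [Fintype ι] [DecidableEq ι]
    (φ : Module.Dual R (ι → R)) (v : ι → R) : φ v = ∑ i, v i * φ (Pi.single i 1) := by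
  conv_lhs => rw [pi_eq_sum_univ' v]
  simp

theorem exists_dual_comp_eq {f : V →ₗ[K] W} {φ : Module.Dual K V}
    (hφ : LinearMap.ker f ≤ LinearMap.ker φ) : ∃ ψ : Module.Dual K W, ψ ∘ₗ f = φ := by
  have hrange : φ ∈ LinearMap.range f.dualMap := by
    rw [LinearMap.range_dualMap_eq_dualAnnihilator_ker, Submodule.mem_dualAnnihilator]
    exact fun w hw => hφ hw
  exact hrange

theorem finrank_map_add_finrank_ker_inf [FiniteDimensional K V] (f : V →ₗ[K] W)
    (D : Submodule K V) :
    Module.finrank K (D.map f) + Module.finrank K (LinearMap.ker f ⊓ D : Submodule K V) =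
      Module.finrank K D := by
  have rank_nullity := (f.domRestrict D).finrank_range_add_finrank_ker
  rwa [LinearMap.range_domRestrict, LinearMap.ker_domRestrict, ← Submodule.finrank_map_subtype_eq,
    Submodule.map_comap_subtype, inf_comm] at rank_nullity

theorem finrank_add_finrank_le_of_comp_eq_zero {K V₁ V₂ V₃ : Type*} [Field K]
    [AddCommGroup V₁] [Module K V₁] [AddCommGroup V₂] [Module K V₂] [AddCommGroup V₃] [Module K V₃]
    [FiniteDimensional K V₂] {f : V₁ →ₗ[K] V₂} {g : V₂ →ₗ[K] V₃} (hf : Function.Injective f)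
    (hg : Function.Surjective g) (hgf : g ∘ₗ f = 0) :
    Module.finrank K V₁ + Module.finrank K V₃ ≤ Module.finrank K V₂ := by
  have range_le_ker := Submodule.finrank_mono (LinearMap.range_le_ker_iff.mpr hgf)
  rw [LinearMap.finrank_range_of_inj hf] at range_le_ker
  rw [← g.finrank_range_add_finrank_ker, LinearMap.range_eq_top.mpr hg, finrank_top]
  omega

theorem exists_linearEquiv_tensorProduct {ι κ : Type*} [Finite ι] [Finite κ]
    (F : W ≃ₗ[K] (ι × κ → K)) :
    ∃ M : W ≃ₗ[K] (ι → K) ⊗[K] (κ → K),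
      ∀ w a b, (∀ i j, F w (i, j) = a i * b j) → M w = a ⊗ₜ b := by
  classical
  have := Fintype.ofFinite ι
  have := Fintype.ofFinite κ
  let basis := (Pi.basisFun K ι).tensorProduct (Pi.basisFun K κ)
  refine ⟨F.trans basis.equivFun.symm, fun w a b hab => ?_⟩
  rw [LinearEquiv.trans_apply, LinearEquiv.symm_apply_eq]
  ext ⟨i, j⟩
  simp [basis, hab, mul_comm]

end LinearAlgebra

section Divisibility

theorem dvd_of_dvd_mul_of_isRelPrime {M : Type*} [CommMonoidWithZero M] [IsCancelMulZero M]
    [DecompositionMonoid M] {a b g h : M} (hab : IsRelPrime a b) (hga : g ∣ h * a)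
    (hgb : g ∣ h * b) : g ∣ h := by
  obtain ⟨g₁, g₂, ⟨h', rfl⟩, hg₂, rfl⟩ := exists_dvd_and_dvd_of_dvd_mul hga
  rcases eq_or_ne g₁ 0 with rfl | hg₁
  · simp
  rw [mul_assoc, mul_dvd_mul_iff_left hg₁] at hgb
  exact mul_dvd_mul_left g₁ ((hab.of_dvd_left hg₂).dvd_of_dvd_mul_right hgb)

theorem finite_image_divisors {M β : Type*} [CommMonoidWithZero M] [UniqueFactorizationMonoid M]
    {f : M → β} (hf : ∀ a b, Associated a b → f a = f b) {h : M} (hh : h ≠ 0) :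
    (f '' {g | g ∣ h}).Finite := by
  let := UniqueFactorizationMonoid.fintypeSubtypeDvd (Associates.mk h)
    (Associates.mk_ne_zero.mpr hh)
  refine (Set.finite_range fun a : {a : Associates M // a ∣ Associates.mk h} =>
    f (Quotient.out a.1)).subset ?_
  rintro _ ⟨g, hg, rfl⟩
  exact ⟨⟨Associates.mk g, Associates.mk_dvd_mk.mpr hg⟩,
    hf _ _ (Associates.mk_eq_mk_iff_associated.mp (Quotient.out_eq _))⟩

end Divisibility

section HomogeneousPolynomials

variable {σ R : Type*} [CommSemiring R]

theorem homogeneousComponent_mul_of_isHomogeneous {q : MvPolynomial σ R} {e : ℕ}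
    (hq : q.IsHomogeneous e) (d : ℕ) (p : MvPolynomial σ R) :
    homogeneousComponent (d + e) (p * q) = homogeneousComponent d p * q := by
  let := gradedAlgebra (σ := σ) (R := R)
  have component :=
    DirectSum.coe_decompose_mul_add_of_right_mem (homogeneousSubmodule σ R) (a := p) (i := d) hq
  simpa [← decomposition.decompose'_apply] using component

theorem isHomogeneous_of_mul_right {S : Type*} [CommRing S] [IsDomain S]
    {p q : MvPolynomial σ S} {d e : ℕ} (hq : q.IsHomogeneous e) (hq0 : q ≠ 0)
    (hpq : (p * q).IsHomogeneous (d + e)) : p.IsHomogeneous d := by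
  have cancel : homogeneousComponent d p * q = p * q := by
    rw [← homogeneousComponent_mul_of_isHomogeneous hq, homogeneousComponent_of_mem hpq, if_pos rfl]
  rw [← mul_right_cancel₀ hq0 cancel]
  exact homogeneousComponent_isHomogeneous d p

/-- Multiplication by a form of degree `e`, from the forms of degree `d` to those of degree
`d + e`. -/
noncomputable def mulHomogeneous {q : MvPolynomial σ R} {e : ℕ} (hq : q.IsHomogeneous e) (d : ℕ) :
    homogeneousSubmodule σ R d →ₗ[R] homogeneousSubmodule σ R (d + e) :=
  (LinearMap.mulRight R q).restrict fun _ hp => IsHomogeneous.mul hp hq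

@[simp]
theorem coe_mulHomogeneous {q : MvPolynomial σ R} {e d : ℕ} (hq : q.IsHomogeneous e)
    (p : homogeneousSubmodule σ R d) : (mulHomogeneous hq d p : MvPolynomial σ R) = p * q :=
  rfl

theorem mulHomogeneous_injective {S : Type*} [CommRing S] [IsDomain S]
    {q : MvPolynomial σ S} {e : ℕ} (hq : q.IsHomogeneous e) (hq0 : q ≠ 0) (d : ℕ) :
    Function.Injective (mulHomogeneous hq d) := fun _ _ h =>
  Subtype.ext (mul_right_cancel₀ hq0 (congrArg Subtype.val h))

/-- The map `(cᵢ) ↦ ∑ cᵢ Dᵢ` on tuples of forms of degree `d`, for a fixed tuple of forms `Dᵢ`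
of degree `e`. -/
noncomputable def dotProductHomogeneous {ι : Type*} [Fintype ι] {D : ι → MvPolynomial σ R} {e : ℕ}
    (hD : ∀ i, (D i).IsHomogeneous e) (d : ℕ) :
    (ι → homogeneousSubmodule σ R d) →ₗ[R] homogeneousSubmodule σ R (d + e) :=
  ∑ i, mulHomogeneous (hD i) d ∘ₗ LinearMap.proj i

theorem coe_dotProductHomogeneous {ι : Type*} [Fintype ι] {D : ι → MvPolynomial σ R} {d e : ℕ}
    (hD : ∀ i, (D i).IsHomogeneous e) (c : ι → homogeneousSubmodule σ R d) :
    (dotProductHomogeneous hD d c : MvPolynomial σ R) = ∑ i, (c i : MvPolynomial σ R) * D i := by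
  simp [dotProductHomogeneous]

variable {K : Type*} [Field K]

theorem finrank_homogeneousSubmodule [Fintype σ] (n : ℕ) :
    Module.finrank K (homogeneousSubmodule σ K n) = (Fintype.card σ).multichoose n := by
  classical
  have degree_eq_iff : {d : σ →₀ ℕ | d.degree = n} =
      ((Finset.univ.finsuppAntidiag n : Finset (σ →₀ ℕ)) : Set (σ →₀ ℕ)) := by
    ext d
    simp [Finset.mem_finsuppAntidiag, Finsupp.degree_eq_sum]
  rw [homogeneousSubmodule_eq_finsupp_supported, degree_eq_iff]
  refine (Module.finrank_eq_card_basis (basisRestrictSupport K _)).trans ?_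
  simp [Finset.card_finsuppAntidiag_nat_eq_multichoose]

instance finiteDimensional_homogeneousSubmodule [Finite σ] (n : ℕ) :
    FiniteDimensional K (homogeneousSubmodule σ K n) :=
  Module.Finite.of_fg (homogeneousSubmodule_fg σ K n)

theorem surjective_of_apply_eq_mul_eval [Infinite K] [Finite σ] {W ι : Type*} [AddCommGroup W]
    [Module K W] [Fintype ι] {h : ι → MvPolynomial σ K}
    (hindep : ∀ l : ι → MvPolynomial σ K, (∀ j, (l j).IsHomogeneous 1) →
      ∑ j, l j * h j = 0 → l = 0)
    {F : W →ₗ[K] (σ × ι → K)} {γ : (σ → K) → W}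
    (hF : ∀ x i j, F (γ x) (i, j) = x i * eval x (h j)) : Function.Surjective F := by
  classical
  have := Fintype.ofFinite σ
  rw [← LinearMap.dualMap_injective_iff, injective_iff_map_eq_zero]
  intro χ hχ
  let l (j : ι) : MvPolynomial σ K := ∑ i, C (χ (Pi.single (i, j) 1)) * X i
  have relation : ∑ j, l j * h j = 0 := MvPolynomial.funext fun x => by
    have vanishes : χ (F (γ x)) = 0 := LinearMap.congr_fun hχ (γ x)
    rw [dual_apply_eq_sum, Fintype.sum_prod_type_right] at vanishes
    simpa [l, hF, Finset.sum_mul, Finset.mul_sum, mul_comm, mul_assoc, mul_left_comm] using vanishes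
  have l_eq_zero := hindep l
    (fun j => IsHomogeneous.sum _ _ _ fun i _ => (isHomogeneous_X K i).C_mul _) relation
  refine (Pi.basisFun K (σ × ι)).ext fun ⟨i, j⟩ => ?_
  simpa [l, Pi.single_apply] using congrArg (eval (Pi.single i 1)) (congrFun l_eq_zero j)

theorem exists_idealOfVars_pow_le_span [IsAlgClosed K] [Finite σ] {ι : Type*}
    {D : ι → MvPolynomial σ K} (hD : ∀ v, (∀ i, eval v (D i) = 0) → v = 0) :
    ∃ r, idealOfVars σ K ^ r ≤ Ideal.span (Set.range D) := by
  have vars_le : idealOfVars σ K ≤ (Ideal.span (Set.range D)).radical := by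
    rw [idealOfVars, Ideal.span_le, ← vanishingIdeal_zeroLocus_eq_radical (K := K)]
    rintro _ ⟨s, rfl⟩ v hv
    rw [zeroLocus_span] at hv
    simp [hD v fun i => by simpa using hv (D i) ⟨i, rfl⟩]
  obtain ⟨r, hr⟩ := Ideal.exists_radical_pow_le_of_fg (Ideal.span (Set.range D))
    (Ideal.fg_of_isNoetherianRing _)
  exact ⟨r, (Ideal.pow_right_mono vars_le r).trans hr⟩

theorem exists_eq_sum_mul_of_isHomogeneous [IsAlgClosed K] [Finite σ] {ι : Type*} [Fintype ι]
    {D : ι → MvPolynomial σ K} {e : ℕ} (hDe : ∀ i, (D i).IsHomogeneous e)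
    (hD : ∀ v, (∀ i, eval v (D i) = 0) → v = 0) :
    ∃ r, ∀ d, r ≤ d → ∀ p : MvPolynomial σ K, p.IsHomogeneous (d + e) →
      ∃ c : ι → MvPolynomial σ K, (∀ i, (c i).IsHomogeneous d) ∧ p = ∑ i, c i * D i := by
  obtain ⟨r, hr⟩ := exists_idealOfVars_pow_le_span hD
  refine ⟨r, fun d hd p hp => ?_⟩
  have p_mem : p ∈ idealOfVars σ K ^ r := by
    rw [mem_pow_idealOfVars_iff']
    exact fun x hx => hp.coeff_eq_zero (by omega)
  obtain ⟨c, rfl⟩ := Ideal.mem_span_range_iff_exists_fun.mp (hr p_mem)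
  refine ⟨fun i => homogeneousComponent d (c i),
    fun i => homogeneousComponent_isHomogeneous d _, ?_⟩
  have component := homogeneousComponent_of_mem (m := d + e) hp
  simpa only [if_pos, map_sum, homogeneousComponent_mul_of_isHomogeneous (hDe _)]
    using component.symm

end HomogeneousPolynomials

section MaximalMinors

variable {R σ : Type*} [CommRing R] {m e : ℕ}

/-- The maximal minor of an `(m + 1) × m` matrix omitting row `i`, with its sign in the Laplace
expansion along an extra column. -/
noncomputable def signedMinor (M : Matrix (Fin (m + 1)) (Fin m) R) (i : Fin (m + 1)) : R :=
  (-1) ^ (i : ℕ) * (M.submatrix i.succAbove id).det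

theorem sum_mul_signedMinor (M : Matrix (Fin (m + 1)) (Fin m) R) (b : Fin (m + 1) → R) :
    ∑ i, b i * signedMinor M i =
      (Matrix.of fun i => (Fin.cons (b i) (M i) : Fin (m + 1) → R)).det := by
  rw [Matrix.det_succ_column_zero]
  refine Finset.sum_congr rfl fun i _ => ?_
  rw [signedMinor, mul_left_comm, ← mul_assoc]
  rfl

theorem sum_apply_mul_signedMinor (M : Matrix (Fin (m + 1)) (Fin m) R) (j : Fin m) :
    ∑ i, M i j * signedMinor M i = 0 := by
  rw [sum_mul_signedMinor M fun i => M i j]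
  exact Matrix.det_zero_of_column_eq (Fin.succ_ne_zero j).symm fun i => by simp

theorem eq_zero_of_mulVec_eq_zero_of_signedMinor_ne_zero [IsDomain R]
    {M : Matrix (Fin (m + 1)) (Fin m) R} {i : Fin (m + 1)} (hi : signedMinor M i ≠ 0)
    {w : Fin m → R} (hw : M.mulVec w = 0) : w = 0 :=
  Matrix.eq_zero_of_mulVec_eq_zero (right_ne_zero_of_mul hi)
    (funext fun a => congrFun hw (i.succAbove a))

theorem exists_mulVec_eq_zero_of_signedMinor_eq_zero {K : Type*} [Field K]
    {M : Matrix (Fin (m + 1)) (Fin m) K} (hM : ∀ i, signedMinor M i = 0) :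
    ∃ w ≠ 0, M.mulVec w = 0 := by
  obtain ⟨b, hb⟩ : ∃ b, ∀ w, M.mulVec w ≠ b := by
    by_contra! surjective
    have := LinearMap.finrank_le_finrank_of_surjective (f := M.mulVecLin) surjective
    simp at this
  have det_eq_zero := (sum_mul_signedMinor M b).symm
  simp only [hM, mul_zero, Finset.sum_const_zero] at det_eq_zero
  obtain ⟨z, hz, hz0⟩ := Matrix.exists_mulVec_eq_zero_iff.mpr det_eq_zero
  have relation : z 0 • b + M.mulVec (Fin.tail z) = 0 := by
    rw [← hz0]
    ext i
    simp [Matrix.mulVec, dotProduct, Fin.sum_univ_succ, Fin.tail, mul_comm]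
  have z_zero : z 0 = 0 := by
    by_contra h
    refine hb (-(z 0)⁻¹ • Fin.tail z) ?_
    rw [Matrix.mulVec_smul, eq_neg_of_add_eq_zero_right relation, smul_neg, neg_smul, neg_neg,
      inv_smul_smul₀ h]
  refine ⟨Fin.tail z, fun h => hz ?_, by simpa [z_zero] using relation⟩
  rw [← Fin.cons_self_tail z, z_zero, h]
  exact Matrix.cons_zero_zero

theorem map_signedMinor {S : Type*} [CommRing S] (f : R →+* S) (M : Matrix (Fin (m + 1)) (Fin m) R)
    (i : Fin (m + 1)) : f (signedMinor M i) = signedMinor (M.map f) i := by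
  simp [signedMinor, RingHom.map_det, Matrix.submatrix_map]

theorem isHomogeneous_det {n : Type*} [Fintype n] [DecidableEq n]
    {M : Matrix n n (MvPolynomial σ R)} (hM : ∀ i j, (M i j).IsHomogeneous e) :
    M.det.IsHomogeneous (Fintype.card n * e) := by
  rw [Matrix.det_apply]
  refine IsHomogeneous.sum _ _ _ fun τ _ => ?_
  refine (homogeneousSubmodule σ R _).smul_of_tower_mem _ ?_
  simpa using IsHomogeneous.prod Finset.univ _ (fun _ => e) fun i _ => hM (τ i) i

theorem isHomogeneous_signedMinor {M : Matrix (Fin (m + 1)) (Fin m) (MvPolynomial σ R)}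
    (hM : ∀ i j, (M i j).IsHomogeneous e) (i : Fin (m + 1)) :
    (signedMinor M i).IsHomogeneous (m * e) := by
  have hdet : (M.submatrix i.succAbove id).det.IsHomogeneous (m * e) := by
    simpa using isHomogeneous_det (M := M.submatrix i.succAbove id) fun a b => hM (i.succAbove a) b
  rcases neg_one_pow_eq_or (MvPolynomial σ R) i with h | h
  · simpa [signedMinor, h] using hdet
  · simpa [signedMinor, h] using hdet.neg

theorem pi_dotProductHomogeneous_injective [IsDomain R]
    {M : Matrix (Fin (m + 1)) (Fin m) (MvPolynomial σ R)} (hM : ∀ i j, (M i j).IsHomogeneous e)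
    {i : Fin (m + 1)} (hi : signedMinor M i ≠ 0) (d : ℕ) :
    Function.Injective (LinearMap.pi fun i => dotProductHomogeneous (hM i) d) := by
  refine (injective_iff_map_eq_zero _).mpr fun c hc => ?_
  have mulVec_eq_zero : M.mulVec (fun j => (c j : MvPolynomial σ R)) = 0 := funext fun i => by
    simpa [coe_dotProductHomogeneous, Matrix.mulVec, dotProduct, mul_comm] using
      congrArg Subtype.val (congrFun hc i)
  have coe_eq_zero := eq_zero_of_mulVec_eq_zero_of_signedMinor_ne_zero hi mulVec_eq_zero
  exact funext fun j => Subtype.ext (congrFun coe_eq_zero j)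

theorem dotProductHomogeneous_signedMinor_comp_pi
    {M : Matrix (Fin (m + 1)) (Fin m) (MvPolynomial σ R)} (hM : ∀ i j, (M i j).IsHomogeneous e)
    {k : ℕ} (hminor : ∀ i, (signedMinor M i).IsHomogeneous k) (d : ℕ) :
    dotProductHomogeneous hminor (d + e) ∘ₗ
      LinearMap.pi (fun i => dotProductHomogeneous (hM i) d) = 0 := by
  refine LinearMap.ext fun c => Subtype.ext ?_
  simp only [LinearMap.comp_apply, coe_dotProductHomogeneous, LinearMap.pi_apply, Finset.sum_mul,
    mul_assoc]
  rw [Finset.sum_comm]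
  simp [← Finset.mul_sum, sum_apply_mul_signedMinor]

theorem succ_mul_multichoose_three_lt {m : ℕ} (hm : 0 < m) (r : ℕ) :
    (m + 1) * Nat.multichoose 3 (r + 1) <
      m * Nat.multichoose 3 r + Nat.multichoose 3 (r + 1 + m) := by
  have closed_form (n : ℕ) : (Nat.multichoose 3 n : ℚ) = (n + 2) * (n + 1) / 2 := by
    rw [Nat.multichoose_eq, show 3 + n - 1 = n + 2 by omega, Nat.choose_symm_add,
      Nat.cast_choose_two]
    push_cast
    ring
  rw [← Nat.cast_lt (α := ℚ)]
  have : (0 : ℚ) < m := mod_cast hm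
  push_cast [closed_form]
  nlinarith

variable {K : Type*} [Field K] [IsAlgClosed K]

-- Otherwise the minors generate all forms of large degree, and the Hilbert–Burch complex
-- `S(-1)ᵐ → Sᵐ⁺¹ → S(m)` of the matrix would violate the dimension count
-- `succ_mul_multichoose_three_lt` in three variables.
theorem exists_eval_signedMinor_eq_zero (hm : 0 < m)
    {M : Matrix (Fin (m + 1)) (Fin m) (MvPolynomial (Fin 3) K)}
    (hM : ∀ i j, (M i j).IsHomogeneous 1) :
    ∃ v ≠ 0, ∀ i, eval v (signedMinor M i) = 0 := by
  by_contra! no_zero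
  have hminor (i) : (signedMinor M i).IsHomogeneous m := by
    simpa using isHomogeneous_signedMinor hM i
  obtain ⟨i₀, hi₀⟩ : ∃ i, signedMinor M i ≠ 0 := by
    obtain ⟨i, hi⟩ := no_zero 1 one_ne_zero
    exact ⟨i, fun h => hi (by simp [h])⟩
  obtain ⟨r, hr⟩ := exists_eq_sum_mul_of_isHomogeneous hminor fun v hv =>
    by_contra fun h => (no_zero v h).elim fun i hi => hi (hv i)
  have combination_surjective : Function.Surjective (dotProductHomogeneous hminor (r + 1)) := by
    rintro ⟨p, hp⟩
    obtain ⟨c, hc, rfl⟩ := hr (r + 1) r.le_succ p hp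
    exact ⟨fun i => ⟨c i, hc i⟩, Subtype.ext (coe_dotProductHomogeneous hminor _)⟩
  have count := finrank_add_finrank_le_of_comp_eq_zero (pi_dotProductHomogeneous_injective hM hi₀ r)
    combination_surjective (dotProductHomogeneous_signedMinor_comp_pi hM hminor r)
  simp only [Module.finrank_pi_fintype, finrank_homogeneousSubmodule, Fintype.card_fin,
    Finset.sum_const, Finset.card_univ, smul_eq_mul] at count
  exact (succ_mul_multichoose_three_lt hm r).not_ge count

theorem exists_sum_smul_apply_eq_zero {W Z : Type*} [AddCommGroup W] [Module K W]
    [AddCommGroup Z] [Module K Z] [FiniteDimensional K W] [FiniteDimensional K Z]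
    [Nontrivial W]
    (hZ : Module.finrank K Z = Module.finrank K W + 1) (f : Fin 3 → W →ₗ[K] Z) :
    ∃ v : Fin 3 → K, v ≠ 0 ∧ ∃ w ≠ 0, (∑ k, v k • f k) w = 0 := by
  let bW := Module.finBasis K W
  let bZ := (Module.finBasis K Z).reindex (finCongr hZ)
  let N (k : Fin 3) := LinearMap.toMatrix bW bZ (f k)
  let M : Matrix _ _ (MvPolynomial (Fin 3) K) := Matrix.of fun i j => ∑ k, C (N k i j) * X k
  have M_eval (v) : M.map (eval v) = LinearMap.toMatrix bW bZ (∑ k, v k • f k) := by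
    ext i j
    simp [M, N, mul_comm, Matrix.sum_apply]
  obtain ⟨v, hv, hminor⟩ := exists_eval_signedMinor_eq_zero (M := M) Module.finrank_pos
    fun i j => IsHomogeneous.sum Finset.univ _ 1 fun k _ => isHomogeneous_C_mul_X (N k i j) k
  simp only [map_signedMinor, M_eval] at hminor
  obtain ⟨w, hw, hMw⟩ := exists_mulVec_eq_zero_of_signedMinor_eq_zero hminor
  have hw0 : bW.equivFun.symm w ≠ 0 := by
    simpa only [ne_eq, LinearEquiv.map_eq_zero_iff] using hw
  refine ⟨v, hv, bW.equivFun.symm w, hw0, bZ.equivFun.injective ?_⟩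
  have coordinates := LinearMap.toMatrix_mulVec_repr bW bZ (∑ k, v k • f k) (bW.equivFun.symm w)
  rw [map_zero, Module.Basis.equivFun_apply, ← coordinates, ← Module.Basis.equivFun_apply,
    LinearEquiv.apply_symm_apply]
  exact hMw

end MaximalMinors

section BinaryForms

variable {K : Type*} [Field K] {n : ℕ}

theorem finrank_homogeneousSubmodule_fin_two (n : ℕ) :
    Module.finrank K (homogeneousSubmodule (Fin 2) K n) = n + 1 := by
  rw [finrank_homogeneousSubmodule, Fintype.card_fin, Nat.multichoose_two]

theorem exists_eval_eq_zero [IsAlgClosed K] {p : MvPolynomial (Fin 2) K}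
    (hp : p.IsHomogeneous (n + 1)) : ∃ y ≠ 0, eval y p = 0 := by
  by_contra! no_zero
  obtain ⟨r, hr⟩ := exists_eq_sum_mul_of_isHomogeneous (D := fun _ : Unit => p) (fun _ => hp)
    fun v hv => by_contra fun h => no_zero v h (hv ())
  have mul_surjective : Function.Surjective (mulHomogeneous hp r) := by
    rintro ⟨f, hf⟩
    obtain ⟨c, hc, rfl⟩ := hr r le_rfl f hf
    exact ⟨⟨c (), hc ()⟩, Subtype.ext (by simp)⟩
  have := LinearMap.finrank_le_finrank_of_surjective mul_surjective
  simp only [finrank_homogeneousSubmodule_fin_two] at this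
  omega

theorem dvd_of_eval_eq_zero {l p : MvPolynomial (Fin 2) K} {y : Fin 2 → K} (hy : y ≠ 0)
    (hl : l.IsHomogeneous 1) (hl0 : l ≠ 0) (hly : eval y l = 0) (hp : p.IsHomogeneous (n + 1))
    (hpy : eval y p = 0) : l ∣ p := by
  let evalAt : homogeneousSubmodule (Fin 2) K (n + 1) →ₗ[K] K :=
    (aeval y).toLinearMap ∘ₗ (homogeneousSubmodule (Fin 2) K (n + 1)).subtype
  have range_eq_ker : LinearMap.range (mulHomogeneous hl n) = LinearMap.ker evalAt := by
    refine Submodule.eq_of_le_of_finrank_le ?_ ?_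
    · rintro _ ⟨c, rfl⟩
      simp [evalAt, hly]
    · obtain ⟨i, hi⟩ := Function.ne_iff.mp hy
      have evalAt_surjective : Function.Surjective evalAt := by
        refine LinearMap.surjective fun h => pow_ne_zero (n + 1) hi ?_
        simpa [evalAt] using LinearMap.congr_fun h ⟨X i ^ (n + 1), isHomogeneous_X_pow i _⟩
      have rank_nullity := evalAt.finrank_range_add_finrank_ker
      rw [LinearMap.range_eq_top.mpr evalAt_surjective, finrank_top, Module.finrank_self,
        finrank_homogeneousSubmodule_fin_two] at rank_nullity
      rw [LinearMap.finrank_range_of_inj (mulHomogeneous_injective hl hl0 n),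
        finrank_homogeneousSubmodule_fin_two]
      omega
  obtain ⟨c, hc⟩ : (⟨p, hp⟩ : homogeneousSubmodule (Fin 2) K (n + 1)) ∈
      LinearMap.range (mulHomogeneous hl n) := by
    rw [range_eq_ker]
    simpa [evalAt, coe_aeval_eq_eval] using hpy
  exact ⟨c, by simpa [mul_comm] using (congrArg Subtype.val hc).symm⟩

theorem exists_isHomogeneous_dvd [IsAlgClosed K] {p : MvPolynomial (Fin 2) K}
    (hp : p.IsHomogeneous (n + 1)) : ∃ q, q.IsHomogeneous n ∧ q ∣ p := by
  obtain ⟨y, hy, hpy⟩ := exists_eval_eq_zero hp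
  let evalAt : homogeneousSubmodule (Fin 2) K 1 →ₗ[K] K :=
    (aeval y).toLinearMap ∘ₗ (homogeneousSubmodule (Fin 2) K 1).subtype
  obtain ⟨⟨l, hl⟩, hly, hl0⟩ := Submodule.exists_mem_ne_zero_of_ne_bot
    (LinearMap.ker_ne_bot_of_finrank_lt (f := evalAt)
      (by simp [finrank_homogeneousSubmodule_fin_two]))
  replace hl0 : l ≠ 0 := by simpa using hl0
  obtain ⟨q, rfl⟩ := dvd_of_eval_eq_zero hy hl hl0
    (by simpa [evalAt, coe_aeval_eq_eval] using hly) hp hpy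
  exact ⟨q, isHomogeneous_of_mul_right hl hl0 (by rwa [mul_comm]), dvd_mul_left q l⟩

theorem dvd_or_exists_common_divisor [IsAlgClosed K] {l m h k : MvPolynomial (Fin 2) K}
    (hl : l.IsHomogeneous 1) (hl0 : l ≠ 0) (hm : m.IsHomogeneous 1)
    (hk : k.IsHomogeneous (n + 1)) (hlm : l * h + m * k = 0) :
    k ∣ h ∨ ∃ q, q.IsHomogeneous n ∧ q ∣ h ∧ q ∣ k := by
  obtain ⟨y, hy, hly⟩ := exists_eval_eq_zero (n := 0) hl
  have product_vanishes : eval y m = 0 ∨ eval y k = 0 := by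
    simpa [hly] using congrArg (eval y) hlm
  rcases product_vanishes with hmy | hky
  · obtain ⟨c, rfl⟩ := dvd_of_eval_eq_zero (n := 0) hy hl hl0 hly hm hmy
    exact .inl ⟨-c, mul_left_cancel₀ hl0 (by linear_combination hlm)⟩
  · obtain ⟨q, rfl⟩ := dvd_of_eval_eq_zero hy hl hl0 hly hk hky
    exact .inr ⟨q, isHomogeneous_of_mul_right hl hl0 (by rwa [mul_comm]),
      ⟨-m, mul_left_cancel₀ hl0 (by linear_combination hlm)⟩, dvd_mul_left q l⟩

end BinaryForms

section DivisorSpans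

variable {n d e : ℕ} {g h k : MvPolynomial (Fin 2) ℂ}

/-- The exponent of the monomial `X₀ⁿ⁻ⁱ X₁ⁱ`, for `i ≤ n`. -/
noncomputable def binaryExponent (n i : ℕ) : Fin 2 →₀ ℕ :=
  Finsupp.single 0 (n - i) + Finsupp.single 1 i

theorem coeff_restrictForm (φ : Module.Dual ℂ (Fin (n + 1) → ℂ)) (i : Fin (n + 1)) :
    coeff (binaryExponent n i) (restrictForm n φ) = φ (Pi.single i 1) := by
  classical
  have exponent_inj (j : Fin (n + 1)) : binaryExponent n j = binaryExponent n i ↔ j = i :=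
    ⟨fun h => Fin.ext (by simpa [binaryExponent] using DFunLike.congr_fun h 1), fun h => h ▸ rfl⟩
  have monomial_eq (j : ℕ) : (X 0 ^ (n - j) * X 1 ^ j : MvPolynomial (Fin 2) ℂ) =
      monomial (binaryExponent n j) 1 := by
    rw [X_pow_eq_monomial, X_pow_eq_monomial, monomial_mul, one_mul, binaryExponent]
  simp [restrictForm, monomial_eq, coeff_sum, coeff_C_mul, exponent_inj]

theorem isHomogeneous_restrictForm (φ : Module.Dual ℂ (Fin (n + 1) → ℂ)) :
    (restrictForm n φ).IsHomogeneous n := by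
  refine IsHomogeneous.sum _ _ _ fun i _ => IsHomogeneous.C_mul ?_ _
  simpa [Nat.sub_add_cancel i.is_le] using
    (isHomogeneous_X_pow (R := ℂ) (0 : Fin 2) (n - i)).mul (isHomogeneous_X_pow 1 (i : ℕ))

/-- `restrictForm n` as the identification of linear functionals on `ℂⁿ⁺¹` with binary forms of
degree `n`. -/
noncomputable def restrictFormEquiv (n : ℕ) :
    Module.Dual ℂ (Fin (n + 1) → ℂ) ≃ₗ[ℂ] homogeneousSubmodule (Fin 2) ℂ n :=
  LinearMap.linearEquivOfInjective
    { toFun φ := ⟨restrictForm n φ, isHomogeneous_restrictForm φ⟩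
      map_add' φ χ := Subtype.ext (by simp [restrictForm, add_mul, Finset.sum_add_distrib])
      map_smul' c φ := Subtype.ext (by
        simp [restrictForm, Finset.smul_sum, smul_eq_C_mul, mul_assoc]) }
    (fun φ χ h => (Pi.basisFun ℂ (Fin (n + 1))).ext fun i => by
      simpa [coeff_restrictForm] using
        congrArg (coeff (binaryExponent n i)) (congrArg Subtype.val h))
    (by simp [finrank_homogeneousSubmodule_fin_two])

@[simp]
theorem coe_restrictFormEquiv (φ : Module.Dual ℂ (Fin (n + 1) → ℂ)) :
    (restrictFormEquiv n φ : MvPolynomial (Fin 2) ℂ) = restrictForm n φ :=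
  rfl

theorem exists_restrictForm_eq (hg : g.IsHomogeneous n) : ∃ φ, restrictForm n φ = g :=
  ⟨(restrictFormEquiv n).symm ⟨g, hg⟩,
    congrArg Subtype.val ((restrictFormEquiv n).apply_symm_apply ⟨g, hg⟩)⟩

theorem eval_restrictForm (φ : Module.Dual ℂ (Fin (n + 1) → ℂ)) (x : Fin 2 → ℂ) :
    eval x (restrictForm n φ) = φ fun i => x 0 ^ (n - (i : ℕ)) * x 1 ^ (i : ℕ) := by
  rw [dual_apply_eq_sum φ]
  simp [restrictForm, mul_comm]

/-- The pairing of `ℂⁿ⁺¹` with binary forms of degree `n` dual to `restrictForm n`. It is extended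
to all polynomials by ignoring the monomials of degree other than `n`. -/
noncomputable def formPairing (n : ℕ) :
    (Fin (n + 1) → ℂ) →ₗ[ℂ] MvPolynomial (Fin 2) ℂ →ₗ[ℂ] ℂ :=
  ∑ i : Fin (n + 1), (LinearMap.proj i).smulRight (lcoeff ℂ (binaryExponent n i))

theorem formPairing_restrictForm (u : Fin (n + 1) → ℂ) (φ : Module.Dual ℂ (Fin (n + 1) → ℂ)) :
    formPairing n u (restrictForm n φ) = φ u := by
  simp [dual_apply_eq_sum φ u, formPairing, coeff_restrictForm]

/-- The catalecticant (Hankel) map of `u`: the form `g` of degree `d` goes to the functional pairing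
`u` with `g * c` on forms `c` of degree `e`. It is meaningful for `d + e = n`. -/
noncomputable def catalecticant (n d e : ℕ) : (Fin (n + 1) → ℂ) →ₗ[ℂ]
    homogeneousSubmodule (Fin 2) ℂ d →ₗ[ℂ] Module.Dual ℂ (homogeneousSubmodule (Fin 2) ℂ e) where
  toFun u := ((LinearMap.mul ℂ (MvPolynomial (Fin 2) ℂ)).compr₂ (formPairing n u)).domRestrict₁₂
    (homogeneousSubmodule (Fin 2) ℂ d) (homogeneousSubmodule (Fin 2) ℂ e)
  map_add' u v := by ext; simp [LinearMap.domRestrict₁₂_apply]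
  map_smul' c u := by ext; simp [LinearMap.domRestrict₁₂_apply]

theorem mem_divisorSpan_iff {u : Fin (n + 1) → ℂ} :
    u ∈ divisorSpan n g ↔ ∀ φ, g ∣ restrictForm n φ → φ u = 0 := by
  simp [divisorSpan]

theorem mem_divisorSpan_of_catalecticant_eq_zero (hn : d + e = n) {u : Fin (n + 1) → ℂ}
    {g : homogeneousSubmodule (Fin 2) ℂ d} (hg : g ≠ 0) (hu : catalecticant n d e u g = 0) :
    u ∈ divisorSpan n g := by
  refine mem_divisorSpan_iff.mpr fun φ ⟨c, hc⟩ => ?_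
  have c_homogeneous : c.IsHomogeneous e := by
    refine isHomogeneous_of_mul_right g.2 (by simpa using hg) ?_
    rw [mul_comm, ← hc, add_comm, hn]
    exact isHomogeneous_restrictForm φ
  rw [← formPairing_restrictForm, hc]
  exact LinearMap.congr_fun hu ⟨c, c_homogeneous⟩

theorem exists_mem_divisorSpan (hn : d + e = n) (hed : e < d) (u : Fin (n + 1) → ℂ) :
    ∃ g : MvPolynomial (Fin 2) ℂ, g.IsHomogeneous d ∧ g ≠ 0 ∧ u ∈ divisorSpan n g := by
  obtain ⟨g, hgu, hg0⟩ := Submodule.exists_mem_ne_zero_of_ne_bot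
    (LinearMap.ker_ne_bot_of_finrank_lt (f := catalecticant n d e u)
      (by simpa [finrank_homogeneousSubmodule_fin_two] using hed))
  exact ⟨g, g.2, by simpa using hg0, mem_divisorSpan_of_catalecticant_eq_zero hn hg0 hgu⟩

/-- The hyperplanes of `ℂⁿ⁺¹` whose restriction to the rational normal curve contains the divisor
of `g`. -/
noncomputable def multiples (n : ℕ) (g : MvPolynomial (Fin 2) ℂ) :
    Submodule ℂ (Module.Dual ℂ (Fin (n + 1) → ℂ)) :=
  ((Ideal.span {g}).restrictScalars ℂ).comap
    ((homogeneousSubmodule (Fin 2) ℂ n).subtype ∘ₗ (restrictFormEquiv n).toLinearMap)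

theorem mem_multiples {φ : Module.Dual ℂ (Fin (n + 1) → ℂ)} :
    φ ∈ multiples n g ↔ g ∣ restrictForm n φ :=
  Ideal.mem_span_singleton

theorem divisorSpan_eq_dualCoannihilator :
    divisorSpan n g = (multiples n g).dualCoannihilator := by
  ext u
  simp [mem_divisorSpan_iff, Submodule.mem_dualCoannihilator, mem_multiples]

theorem divisorSpan_le_ker_iff {φ : Module.Dual ℂ (Fin (n + 1) → ℂ)} :
    divisorSpan n g ≤ LinearMap.ker φ ↔ g ∣ restrictForm n φ := by
  rw [← mem_multiples, ← Subspace.dualCoannihilator_dualAnnihilator_eq (W := multiples n g),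
    ← divisorSpan_eq_dualCoannihilator, Submodule.mem_dualAnnihilator]
  rfl

theorem finrank_divisorSpan (hg : g.IsHomogeneous d) (hg0 : g ≠ 0) (hd : d ≤ n) :
    Module.finrank ℂ (divisorSpan n g) = d := by
  obtain ⟨e, rfl⟩ := Nat.exists_eq_add_of_le' hd
  have multiples_eq : multiples (e + d) g =
      LinearMap.range ((restrictFormEquiv (e + d)).symm.toLinearMap ∘ₗ mulHomogeneous hg e) := by
    ext φ
    rw [mem_multiples]
    constructor
    · rintro ⟨c, hc⟩
      rw [mul_comm] at hc
      have c_homogeneous := isHomogeneous_of_mul_right hg hg0 (hc ▸ isHomogeneous_restrictForm φ)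
      refine ⟨⟨c, c_homogeneous⟩, ?_⟩
      rw [LinearMap.comp_apply, LinearEquiv.coe_coe, LinearEquiv.symm_apply_eq]
      exact Subtype.ext hc.symm
    · rintro ⟨c, rfl⟩
      rw [← coe_restrictFormEquiv]
      simp
  have injective :=
    (restrictFormEquiv (e + d)).symm.injective.comp (mulHomogeneous_injective hg hg0 e)
  have codimension := Subspace.finrank_add_finrank_dualCoannihilator_eq (multiples (e + d) g)
  rw [← divisorSpan_eq_dualCoannihilator, multiples_eq, LinearMap.finrank_range_of_inj injective,
    finrank_homogeneousSubmodule_fin_two, Module.finrank_fin_fun] at codimension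
  omega

theorem divisorSpan_mono (hgh : g ∣ h) : divisorSpan n g ≤ divisorSpan n h := fun _ hu =>
  mem_divisorSpan_iff.mpr fun φ hφ => mem_divisorSpan_iff.mp hu φ (hgh.trans hφ)

theorem divisorSpan_eq_of_associated (hgh : Associated g h) :
    divisorSpan n g = divisorSpan n h :=
  le_antisymm (divisorSpan_mono hgh.dvd) (divisorSpan_mono hgh.dvd')

theorem dvd_of_divisorSpan_le (hh : h.IsHomogeneous d) (hd : d ≤ n)
    (hgh : divisorSpan n g ≤ divisorSpan n h) : g ∣ h := by
  have dvd_mul_X_pow (i : Fin 2) : g ∣ h * X i ^ (n - d) := by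
    have homogeneous : (h * X i ^ (n - d)).IsHomogeneous n := by
      simpa [Nat.add_sub_cancel' hd] using hh.mul (isHomogeneous_X_pow i (n - d))
    obtain ⟨φ, hφ⟩ := exists_restrictForm_eq homogeneous
    rw [← hφ, ← divisorSpan_le_ker_iff]
    exact hgh.trans (divisorSpan_le_ker_iff.mpr (hφ ▸ dvd_mul_right h _))
  refine dvd_of_dvd_mul_of_isRelPrime (IsRelPrime.pow ?_) (dvd_mul_X_pow 0) (dvd_mul_X_pow 1)
  rw [X_prime.irreducible.isRelPrime_iff_not_dvd]
  simp

theorem inf_divisorSpan_eq_of_dvd (hd : d + 1 ≤ n) (hg : g.IsHomogeneous d)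
    (hh : h.IsHomogeneous (d + 1)) (hk : k.IsHomogeneous (d + 1))
    (hk0 : k ≠ 0) (hkh : ¬ k ∣ h) (hgh : g ∣ h) (hgk : g ∣ k) :
    divisorSpan n h ⊓ divisorSpan n k = divisorSpan n g := by
  have inf_lt : divisorSpan n h ⊓ divisorSpan n k < divisorSpan n k :=
    inf_lt_right.mpr fun hle => hkh (dvd_of_divisorSpan_le hh hd hle)
  have finrank_lt := Submodule.finrank_lt_finrank_of_lt inf_lt
  rw [finrank_divisorSpan hk hk0 hd] at finrank_lt
  refine (Submodule.eq_of_le_of_finrank_le (le_inf (divisorSpan_mono hgh) (divisorSpan_mono hgk))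
    ?_).symm
  rw [finrank_divisorSpan hg (ne_zero_of_dvd_ne_zero hk0 hgk) (by omega)]
  omega

theorem divisorSpan_le_sup_ker {W : Type*} [AddCommGroup W] [Module ℂ W]
    {B : (Fin (n + 1) → ℂ) →ₗ[ℂ] W}
    (hh : ∀ ψ : Module.Dual ℂ W, (divisorSpan n g).map B ≤ LinearMap.ker ψ →
      h ∣ restrictForm n (ψ ∘ₗ B)) :
    divisorSpan n h ≤ divisorSpan n g ⊔ LinearMap.ker B := by
  intro x hx
  by_contra hx_sup
  obtain ⟨φ, hφx, hφ⟩ := Submodule.exists_le_ker_of_notMem hx_sup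
  obtain ⟨ψ, rfl⟩ := exists_dual_comp_eq (le_sup_right.trans hφ)
  refine hφx (mem_divisorSpan_iff.mp hx _ (hh ψ ?_))
  rw [Submodule.map_le_iff_le_comap, ← LinearMap.ker_comp]
  exact le_sup_left.trans hφ

theorem exists_mem_forall_notMem_divisorSpan {U : Submodule ℂ (Fin (n + 1) → ℂ)} (hh : h ≠ 0)
    (hU : ∀ g, g.IsHomogeneous d → g ∣ h → ¬ U ≤ divisorSpan n g) :
    ∃ u ∈ U, ∀ g, g.IsHomogeneous d → g ∣ h → u ∉ divisorSpan n g := by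
  let traces := (fun g => (divisorSpan n g).comap U.subtype) ''
    {g : MvPolynomial (Fin 2) ℂ | g ∣ h ∧ g.IsHomogeneous d}
  have finite : traces.Finite :=
    (finite_image_divisors (fun _ _ hab => by rw [divisorSpan_eq_of_associated hab]) hh).subset
      (Set.image_mono fun g hg => hg.1)
  have proper : ⊤ ∉ finite.toFinset := by
    rw [Set.Finite.mem_toFinset]
    rintro ⟨g, ⟨hgh, hg⟩, htop⟩
    exact hU g hg hgh (Submodule.comap_subtype_eq_top.mp htop)
  obtain ⟨u, hu⟩ :=
    (Set.ne_univ_iff_exists_notMem _).mp (Subspace.biUnion_ne_univ_of_top_notMem proper)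
  refine ⟨u, u.2, fun g hg hgh hug => hu ?_⟩
  simp only [Set.Finite.mem_toFinset, Set.mem_iUnion]
  exact ⟨_, ⟨g, ⟨hgh, hg⟩, rfl⟩, hug⟩

end DivisorSpans

section DisjointFromSecants

variable {n d : ℕ} {U : Submodule ℂ (Fin (n + 1) → ℂ)} {g h k l m : MvPolynomial (Fin 2) ℂ}

/-- The subspace `U ⊆ ℂⁿ⁺¹` meets no span of a divisor of degree `d` on the rational normal curve.
For `d = 2` and `U = ker A`, this is smoothness of the curve projected by `A`. -/
def DisjointFromSecants (d : ℕ) (U : Submodule ℂ (Fin (n + 1) → ℂ)) : Prop :=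
  ∀ q : MvPolynomial (Fin 2) ℂ, q.IsHomogeneous d → q ≠ 0 → U ⊓ divisorSpan n q = ⊥

-- The secant variety is determinantal of codimension two in `ℙⁿ`, so it meets every plane.
theorem DisjointFromSecants.finrank_le_two (hn : n = 2 * d + 1) (hU : DisjointFromSecants d U) :
    Module.finrank ℂ U ≤ 2 := by
  by_contra! three_le
  obtain ⟨u, hu⟩ := exists_linearIndependent_of_le_finrank three_le
  have : Nontrivial (homogeneousSubmodule (Fin 2) ℂ d) :=
    Module.nontrivial_of_finrank_pos (R := ℂ) (by simp [finrank_homogeneousSubmodule_fin_two])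
  obtain ⟨v, hv, q, hq, hvq⟩ := exists_sum_smul_apply_eq_zero
    (by simp [finrank_homogeneousSubmodule_fin_two]) fun k => catalecticant n d (d + 1) (u k)
  have combination_mem : (∑ k, v k • u k : U).1 ∈ U ⊓ divisorSpan n q := by
    refine ⟨Subtype.prop _, mem_divisorSpan_of_catalecticant_eq_zero (e := d + 1) (by omega) hq ?_⟩
    simpa using hvq
  rw [hU q q.2 (by simpa using hq), Submodule.mem_bot, ZeroMemClass.coe_eq_zero] at combination_mem
  exact hv (funext (Fintype.linearIndependent_iff.mp hu v combination_mem))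

theorem DisjointFromSecants.finrank_inf_divisorSpan_le_one (hU : DisjointFromSecants d U)
    (hd : d + 1 ≤ n) (hg : g.IsHomogeneous (d + 1)) (hg0 : g ≠ 0) :
    Module.finrank ℂ (U ⊓ divisorSpan n g : Submodule ℂ (Fin (n + 1) → ℂ)) ≤ 1 := by
  obtain ⟨q, hq, hqg⟩ := exists_isHomogeneous_dvd hg
  have hq0 := ne_zero_of_dvd_ne_zero hg0 hqg
  have disjoint : U ⊓ divisorSpan n g ⊓ divisorSpan n q = ⊥ :=
    le_bot_iff.mp (hU q hq hq0 ▸ inf_le_inf_right _ inf_le_left)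
  have sup_le : U ⊓ divisorSpan n g ⊔ divisorSpan n q ≤ divisorSpan n g :=
    sup_le inf_le_right (divisorSpan_mono hqg)
  have dimensions :=
    Submodule.finrank_sup_add_finrank_inf_eq (U ⊓ divisorSpan n g) (divisorSpan n q)
  rw [disjoint, finrank_bot, finrank_divisorSpan hq hq0 (by omega)] at dimensions
  have finrank_le := Submodule.finrank_mono sup_le
  rw [finrank_divisorSpan hg hg0 hd] at finrank_le
  omega

theorem DisjointFromSecants.not_le_divisorSpan (hU : DisjointFromSecants d U)
    (hfinrank : 2 ≤ Module.finrank ℂ U) (hd : d + 1 ≤ n) (hg : g.IsHomogeneous (d + 1))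
    (hg0 : g ≠ 0) : ¬ U ≤ divisorSpan n g := by
  intro hle
  have finrank_le := hU.finrank_inf_divisorSpan_le_one hd hg hg0
  rw [inf_eq_left.mpr hle] at finrank_le
  omega

theorem DisjointFromSecants.eq_zero_of_mul_add_mul_eq_zero (hU : DisjointFromSecants d U)
    (hfinrank : 2 ≤ Module.finrank ℂ U) (hd : d + 2 ≤ n) (hh : h.IsHomogeneous (d + 2))
    (hk : k.IsHomogeneous (d + 2)) (hk0 : k ≠ 0) (hkh : ¬ k ∣ h) (hUh : U ≤ divisorSpan n h)
    (hUk : U ≤ divisorSpan n k) (hl : l.IsHomogeneous 1) (hm : m.IsHomogeneous 1)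
    (hlm : l * h + m * k = 0) : l = 0 ∧ m = 0 := by
  rcases eq_or_ne l 0 with rfl | hl0
  · simpa [hk0] using hlm
  obtain ⟨q, hq, hqh, hqk⟩ := (dvd_or_exists_common_divisor hl hl0 hm hk hlm).resolve_left hkh
  have U_le : U ≤ divisorSpan n q :=
    inf_divisorSpan_eq_of_dvd hd hq hh hk hk0 hkh hqh hqk ▸ le_inf hUh hUk
  exact absurd U_le (hU.not_le_divisorSpan hfinrank (by omega) hq (ne_zero_of_dvd_ne_zero hk0 hqk))

end DisjointFromSecants

section Quintic

variable {A : (Fin 6 → ℂ) →ₗ[ℂ] (Fin 4 → ℂ)} {g h : MvPolynomial (Fin 2) ℂ}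

theorem finrank_ker_eq_two (hsmooth : DisjointFromSecants 2 (LinearMap.ker A)) :
    Module.finrank ℂ (LinearMap.ker A) = 2 := by
  have upper : Module.finrank ℂ (LinearMap.ker A) ≤ 2 :=
    hsmooth.finrank_le_two rfl
  have rank_nullity := A.finrank_range_add_finrank_ker
  have range_le := Submodule.finrank_le (LinearMap.range A)
  simp only [Module.finrank_fin_fun] at rank_nullity range_le
  omega

theorem isSecantLine_map_divisorSpan {k : ℕ} (hg : g.IsHomogeneous k) (hg0 : g ≠ 0)
    (hfinrank : Module.finrank ℂ ((divisorSpan 5 g).map A) = 2) :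
    IsSecantLine A k ((divisorSpan 5 g).map A) := by
  refine ⟨hfinrank, g, hg, hg0, fun ψ hψ => divisorSpan_le_ker_iff.mp ?_⟩
  rwa [LinearMap.ker_comp, ← Submodule.map_le_iff_le_comap]

theorem exists_quartic_of_cubic (hsmooth : DisjointFromSecants 2 (LinearMap.ker A))
    (hsec : ∀ L : Submodule ℂ (Fin 4 → ℂ), IsSecantLine A 3 L → IsSecantLine A 4 L)
    (hg : g.IsHomogeneous 3) (hg0 : g ≠ 0)
    (hmeet : LinearMap.ker A ⊓ divisorSpan 5 g ≠ ⊥) :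
    ∃ h : MvPolynomial (Fin 2) ℂ, h.IsHomogeneous 4 ∧ h ≠ 0 ∧ g ∣ h ∧
      LinearMap.ker A ≤ divisorSpan 5 h := by
  have finrank_meet : Module.finrank ℂ
      (LinearMap.ker A ⊓ divisorSpan 5 g : Submodule ℂ (Fin 6 → ℂ)) = 1 :=
    le_antisymm (hsmooth.finrank_inf_divisorSpan_le_one (by omega) hg hg0)
      (Submodule.one_le_finrank_iff.mpr hmeet)
  have finrank_g := finrank_divisorSpan hg hg0 (n := 5) (by omega)
  have finrank_line := (finrank_map_add_finrank_ker_inf A (divisorSpan 5 g)).trans finrank_g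
  rw [finrank_meet] at finrank_line
  obtain ⟨-, h, hh, hh0, hdvd⟩ := hsec _ (isSecantLine_map_divisorSpan hg hg0 (by omega))
  have finrank_sup := Submodule.finrank_sup_add_finrank_inf_eq (divisorSpan 5 g) (LinearMap.ker A)
  rw [inf_comm, finrank_meet, finrank_g, finrank_ker_eq_two hsmooth] at finrank_sup
  have span_eq : divisorSpan 5 h = divisorSpan 5 g ⊔ LinearMap.ker A :=
    Submodule.eq_of_le_of_finrank_eq (divisorSpan_le_sup_ker hdvd)
      (by rw [finrank_divisorSpan hh hh0 (by omega)]; omega)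
  exact ⟨h, hh, hh0, dvd_of_divisorSpan_le hh (by omega) (span_eq ▸ le_sup_left),
    span_eq ▸ le_sup_right⟩

theorem exists_quartics_not_dvd (hsmooth : DisjointFromSecants 2 (LinearMap.ker A))
    (hsec : ∀ L : Submodule ℂ (Fin 4 → ℂ), IsSecantLine A 3 L → IsSecantLine A 4 L) :
    ∃ h : Fin 2 → MvPolynomial (Fin 2) ℂ, (∀ j, (h j).IsHomogeneous 4) ∧ (∀ j, h j ≠ 0) ∧
      (∀ j, LinearMap.ker A ≤ divisorSpan 5 (h j)) ∧ ¬ h 1 ∣ h 0 := by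
  have quartic_through {u : Fin 6 → ℂ} (hu : u ∈ LinearMap.ker A) (hu0 : u ≠ 0) :
      ∃ g h : MvPolynomial (Fin 2) ℂ, (g.IsHomogeneous 3 ∧ u ∈ divisorSpan 5 g) ∧
        h.IsHomogeneous 4 ∧ h ≠ 0 ∧ g ∣ h ∧ LinearMap.ker A ≤ divisorSpan 5 h := by
    obtain ⟨g, hg, hg0, hug⟩ := exists_mem_divisorSpan (d := 3) (e := 2) rfl (by omega) u
    obtain ⟨h, hh⟩ := exists_quartic_of_cubic hsmooth hsec hg hg0
      ((Submodule.ne_bot_iff _).mpr ⟨u, ⟨hu, hug⟩, hu0⟩)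
    exact ⟨g, h, ⟨hg, hug⟩, hh⟩
  have ker_ne_bot : LinearMap.ker A ≠ ⊥ := LinearMap.ker_ne_bot_of_finrank_lt (by simp)
  obtain ⟨u, hu, hu0⟩ := Submodule.exists_mem_ne_zero_of_ne_bot ker_ne_bot
  obtain ⟨-, h, -, hh, hh0, -, hker⟩ := quartic_through hu hu0
  obtain ⟨v, hv, hvh⟩ := exists_mem_forall_notMem_divisorSpan hh0 fun g hg hgh =>
    hsmooth.not_le_divisorSpan (finrank_ker_eq_two hsmooth).ge (by omega) hg
      (ne_zero_of_dvd_ne_zero hh0 hgh)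
  have hv0 : v ≠ 0 := by
    rintro rfl
    obtain ⟨g, hg, hgh⟩ := exists_isHomogeneous_dvd hh
    exact hvh g hg hgh (zero_mem _)
  obtain ⟨g, k, ⟨hg, hvg⟩, hk, hk0, hgk, hker'⟩ := quartic_through hv hv0
  refine ⟨![h, k], by simp [hh, hk], by simp [hh0, hk0], by simp [hker, hker'], fun hhk => ?_⟩
  exact hvh g hg (hgk.trans hhk) hvg

theorem exists_dual_apply_quinticCurve {p : MvPolynomial (Fin 2) ℂ}
    (hker : LinearMap.ker A ≤ divisorSpan 5 h) (hp : p.IsHomogeneous 5) (hdvd : h ∣ p) :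
    ∃ ψ : Module.Dual ℂ (Fin 4 → ℂ), ∀ x, ψ (quinticCurve A x) = eval x p := by
  obtain ⟨φ, rfl⟩ := exists_restrictForm_eq hp
  obtain ⟨ψ, rfl⟩ := exists_dual_comp_eq (hker.trans (divisorSpan_le_ker_iff.mpr hdvd))
  exact ⟨ψ, fun x => (eval_restrictForm (ψ ∘ₗ A) x).symm⟩

theorem exists_linearEquiv_quinticCurve {h : Fin 2 → MvPolynomial (Fin 2) ℂ}
    (hh : ∀ j, (h j).IsHomogeneous 4) (hker : ∀ j, LinearMap.ker A ≤ divisorSpan 5 (h j))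
    (hindep : ∀ l : Fin 2 → MvPolynomial (Fin 2) ℂ, (∀ j, (l j).IsHomogeneous 1) →
      ∑ j, l j * h j = 0 → l = 0) :
    ∃ F : (Fin 4 → ℂ) ≃ₗ[ℂ] (Fin 2 × Fin 2 → ℂ),
      ∀ x i j, F (quinticCurve A x) (i, j) = x i * eval x (h j) := by
  choose ψ hψ using fun ij : Fin 2 × Fin 2 => exists_dual_apply_quinticCurve (hker ij.2)
    ((isHomogeneous_X ℂ ij.1).mul (hh ij.2)) (dvd_mul_left _ _)
  have coordinates (x : Fin 2 → ℂ) (i j : Fin 2) :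
      LinearMap.pi ψ (quinticCurve A x) (i, j) = x i * eval x (h j) := by simp [hψ]
  have surjective := surjective_of_apply_eq_mul_eval hindep coordinates
  have injective :=
    (LinearMap.injective_iff_surjective_of_finrank_eq_finrank (by simp)).mpr surjective
  exact ⟨.ofBijective (LinearMap.pi ψ) ⟨injective, surjective⟩, coordinates⟩

end Quintic

/-- Let `C ⊂ ℙ³` be a smooth quintic rational curve, presented as the projection of the
rational normal quintic `C' ⊂ ℙ⁵` from a center line (the kernel of `A : ℂ⁶ → ℂ⁴`)
meeting no secant or tangent line of `C'` (smoothness).  If every 3-secant line of `C`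
is a 4-secant line, then `C` lies on a smooth quadric surface `S ≅ ℙ¹ × ℙ¹` as a divisor
of type `(1,4)`: there is a linear identification `M : ℂ⁴ ≅ ℂ² ⊗ ℂ²` (whose Segre quadric
is the smooth quadric `S`) under which the parametrization of `C` factors as
`x ↦ a(x) ⊗ b(x)` with `a` of bidegree `1` and `b` of bidegree `4` in the homogeneous
coordinates `x` of `ℙ¹`. -/
theorem quintic_with_all_trisecants_quadrisecant_lies_on_quadric
    (A : (Fin 6 → ℂ) →ₗ[ℂ] (Fin 4 → ℂ))
    (hsmooth : ∀ g : MvPolynomial (Fin 2) ℂ, g.IsHomogeneous 2 → g ≠ 0 →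
      LinearMap.ker A ⊓ divisorSpan 5 g = ⊥)
    (hsec : ∀ L : Submodule ℂ (Fin 4 → ℂ), IsSecantLine A 3 L → IsSecantLine A 4 L) :
    ∃ (M : (Fin 4 → ℂ) ≃ₗ[ℂ] TensorProduct ℂ (Fin 2 → ℂ) (Fin 2 → ℂ))
      (α : Fin 2 → Fin 2 → ℂ) (β : Fin 2 → Fin 5 → ℂ),
      ∀ x : Fin 2 → ℂ,
        M (quinticCurve A x) =
          (fun j => α j 0 * x 0 + α j 1 * x 1) ⊗ₜ[ℂ]
          (fun j : Fin 2 => ∑ m : Fin 5, β j m * (x 0 ^ (4 - (m : ℕ)) * x 1 ^ (m : ℕ))) := by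
  obtain ⟨h, hh, hh0, hker, hndvd⟩ := exists_quartics_not_dvd hsmooth hsec
  have hindep (l : Fin 2 → MvPolynomial (Fin 2) ℂ) (hl : ∀ j, (l j).IsHomogeneous 1)
      (hlh : ∑ j, l j * h j = 0) : l = 0 := by
    rw [Fin.sum_univ_two] at hlh
    exact funext <| Fin.forall_fin_two.mpr <|
      DisjointFromSecants.eq_zero_of_mul_add_mul_eq_zero hsmooth (finrank_ker_eq_two hsmooth).ge
      (by decide) (hh 0) (hh 1) (hh0 1) hndvd (hker 0) (hker 1) (hl 0) (hl 1) hlh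
  obtain ⟨F, hF⟩ := exists_linearEquiv_quinticCurve hh hker hindep
  obtain ⟨M, hM⟩ := exists_linearEquiv_tensorProduct F
  choose φ hφ using fun j => exists_restrictForm_eq (hh j)
  refine ⟨M, fun i => Pi.single i 1, fun j m => φ j (Pi.single m 1),
    fun x => hM _ _ _ fun i j => ?_⟩
  rw [hF, ← hφ j]
  fin_cases i <;> simp [restrictForm]
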